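/- arXiv:1708.09046 — 2 statements merged into one kernel-verified Lean document; each statement's English description precedes it below -/
import Mathlib

section
/- There is an absolute constant C > 0 such that the following holds. Let 0 < λ₁ ≤ λ₂ ≤ 1/2, let J be a finite set of jobs each of whose relative laxity lies in [λ₁, λ₂], and suppose J is feasible on m* machines. If m ≥ C·m*·(1 + log(λ₂/λ₁)/log(1/λ₂)), then every SJF schedule of J on m machines completes every job by its deadline, i.e. |P_j| = p_j for all j ∈ J. In words: SJF is O(log_{1/λ₂}(λ₂/λ₁))-machine optimal on jobs whose relative laxities lie in [λ₁, λ₂] ⊆ (0, 1/2]. -/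
open MeasureTheory Set

/-- A job with release time `r`, size `p > 0` and deadline `d`, satisfying `r + p ≤ d`. -/
structure Job where
  r : ℝ
  p : ℝ
  d : ℝ
  p_pos : 0 < p
  fits : r + p ≤ d

namespace Job

/-- The lifespan `I(j) = [r_j, d_j]` of a job. -/
def lifespan (j : Job) : Set ℝ := Set.Icc j.r j.d

/-- The length `|I(j)| = d_j - r_j` of the lifespan of a job. -/
def len (j : Job) : ℝ := j.d - j.r

/-- The laxity `ℓ_j = d_j - r_j - p_j` of a job. -/
def laxity (j : Job) : ℝ := j.d - j.r - j.p

/-- A job is `α`-tight if `p_j ≥ α·|I(j)|`. -/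
def IsTight (α : ℝ) (j : Job) : Prop := α * j.len ≤ j.p

end Job

/-- `P` is a schedule of the jobs `job j`, `j ∈ J`, on `m` machines:
each job is processed on a measurable subset of its lifespan, and at every time
at most `m` jobs are processed simultaneously. -/
def IsSchedule {ι : Type*} (J : Finset ι) (job : ι → Job) (m : ℕ) (P : ι → Set ℝ) : Prop :=
  (∀ j ∈ J, MeasurableSet (P j)) ∧
  (∀ j ∈ J, P j ⊆ (job j).lifespan) ∧
  (∀ t : ℝ, ∀ S : Finset ι, S ⊆ J → (∀ j ∈ S, t ∈ P j) → S.card ≤ m)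

/-- The jobs `job j`, `j ∈ J`, are feasible on `m` machines: there is a schedule on `m`
machines processing every job for exactly `p_j` time units. -/
def FeasibleOn {ι : Type*} (J : Finset ι) (job : ι → Job) (m : ℕ) : Prop :=
  ∃ P : ι → Set ℝ, IsSchedule J job m P ∧
    ∀ j ∈ J, volume (P j) = ENNReal.ofReal (job j).p

/-- `T ⊆ ℝ` is a finite union of (closed) time intervals. -/
def FiniteUnionOfIntervals (T : Set ℝ) : Prop :=
  ∃ s : Finset (ℝ × ℝ), T = ⋃ q ∈ s, Set.Icc q.1 q.2

/-- Job `j` is alive at time `t` under schedule `P`: `t ∈ [r_j, d_j)` and the work done on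
`j` before `t` is less than `p_j`. -/
def Alive {ι : Type*} (job : ι → Job) (P : ι → Set ℝ) (j : ι) (t : ℝ) : Prop :=
  t ∈ Set.Ico (job j).r (job j).d ∧
    volume (P j ∩ Set.Ico (job j).r t) < ENNReal.ofReal (job j).p

/-- `P` is an SJF (Shortest Job First) schedule of the jobs `J` on `m` machines: it is a
schedule, jobs are processed only while alive, and for almost every time `t`, if some job is
alive but not processed at `t`, then `m` alive jobs of size at most its size are processed
at `t`. -/
def IsSJFSchedule {ι : Type*} (J : Finset ι) (job : ι → Job) (m : ℕ) (P : ι → Set ℝ) : Prop :=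
  IsSchedule J job m P ∧
  (∀ j ∈ J, ∀ t ∈ P j, Alive job P j t) ∧
  (∀ᵐ t : ℝ ∂volume, ∀ j ∈ J, Alive job P j t → t ∉ P j →
    ∃ S : Finset ι, S ⊆ J ∧ S.card = m ∧
      ∀ i ∈ S, t ∈ P i ∧ Alive job P i t ∧ (job i).p ≤ (job j).p)

section Core

/-- Markov-type bound: every point of `B` lies in at least `a` of the sets `X i`. -/
theorem aux_markov {ι : Type} (μ : Measure ℝ) [IsFiniteMeasure μ] (G : Finset ι)
    (X : ι → Set ℝ) (hX : ∀ i ∈ G, MeasurableSet (X i)) (B : Set ℝ) (a : ℕ)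
    (h : ∀ x ∈ B, ∃ S : Finset ι, S ⊆ G ∧ a ≤ S.card ∧ ∀ i ∈ S, x ∈ X i) :
    (a : ℝ) * μ.real B ≤ ∑ i ∈ G, μ.real (X i) := by
  classical
  have h1 : (a : ENNReal) * μ B ≤ ∑ i ∈ G, μ (X i) := by
    calc (a : ENNReal) * μ B
        ≤ (a : ENNReal) * μ {x | (a : ENNReal) ≤ ∑ i ∈ G, (X i).indicator 1 x} := by
          gcongr
          intro x hx
          obtain ⟨S, hS, hc, hm⟩ := h x hx
          show (a : ENNReal) ≤ ∑ i ∈ G, (X i).indicator 1 x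
          calc (a : ENNReal) ≤ (S.card : ENNReal) := by exact_mod_cast hc
            _ = ∑ i ∈ S, (X i).indicator 1 x := by
                rw [Finset.sum_congr rfl (g := fun _ => (1 : ENNReal))]
                · simp
                · intro i hi
                  simp [hm i hi]
            _ ≤ _ := Finset.sum_le_sum_of_subset hS
      _ ≤ ∫⁻ x, ∑ i ∈ G, (X i).indicator 1 x ∂μ := by
          apply mul_meas_ge_le_lintegral
          exact Finset.measurable_sum _ fun i hi => measurable_one.indicator (hX i hi)
      _ = ∑ i ∈ G, μ (X i) := by
          rw [lintegral_finsetSum' _ fun i hi => (measurable_one.indicator (hX i hi)).aemeasurable]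
          exact Finset.sum_congr rfl fun i hi => lintegral_indicator_one (hX i hi)
  have h2 := ENNReal.toReal_mono (by simp [ENNReal.sum_eq_top]) h1
  rw [ENNReal.toReal_mul, ENNReal.toReal_sum (by simp)] at h2
  simpa [Measure.real] using h2

/-- Bounded overlap: every point lies in at most `b` of the sets `X i ⊆ W`. -/
theorem aux_overlap {ι : Type} (μ : Measure ℝ) [IsFiniteMeasure μ] (G : Finset ι)
    (X : ι → Set ℝ) (hX : ∀ i ∈ G, MeasurableSet (X i)) (W : Set ℝ) (hW : MeasurableSet W)
    (hsub : ∀ i ∈ G, X i ⊆ W) (b : ℕ)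
    (h : ∀ x, ∀ S : Finset ι, S ⊆ G → (∀ i ∈ S, x ∈ X i) → S.card ≤ b) :
    ∑ i ∈ G, μ.real (X i) ≤ (b : ℝ) * μ.real W := by
  classical
  have h1 : ∑ i ∈ G, μ (X i) ≤ (b : ENNReal) * μ W := by
    calc ∑ i ∈ G, μ (X i) = ∫⁻ x, ∑ i ∈ G, (X i).indicator 1 x ∂μ := by
          rw [lintegral_finsetSum' _ fun i hi => (measurable_one.indicator (hX i hi)).aemeasurable]
          exact Finset.sum_congr rfl fun i hi => (lintegral_indicator_one (hX i hi)).symm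
      _ ≤ ∫⁻ x, W.indicator (fun _ => (b : ENNReal)) x ∂μ := by
          apply lintegral_mono
          intro x
          by_cases hx : x ∈ W
          · have hc := h x (G.filter fun i => x ∈ X i) (Finset.filter_subset _ _)
              (fun i hi => (Finset.mem_filter.1 hi).2)
            simp only [hx, Set.indicator_of_mem]
            have : ∑ i ∈ G, (X i).indicator (1 : ℝ → ENNReal) x
                = ((G.filter fun i => x ∈ X i).card : ENNReal) := by
              rw [Finset.card_filter]
              push_cast
              refine Finset.sum_congr rfl fun i hi => ?_
              simp [Set.indicator_apply]
            rw [this]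
            exact_mod_cast hc
          · simp only [hx, not_false_eq_true, Set.indicator_of_notMem, nonpos_iff_eq_zero]
            refine Finset.sum_eq_zero fun i hi => ?_
            exact Set.indicator_of_notMem (fun hh => hx (hsub i hi hh)) _
      _ = (b : ENNReal) * μ W := lintegral_indicator_const hW _
  have h2 := ENNReal.toReal_mono (by finiteness) h1
  rw [ENNReal.toReal_mul, ENNReal.toReal_sum (by simp)] at h2
  simpa [Measure.real] using h2

/-- A finite family of intervals has a subfamily with the same union and overlap at most two. -/
theorem aux_minimal_cover {ι : Type} (Q : Finset ι) (l u : ι → ℝ) :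
    ∃ N : Finset ι, N ⊆ Q ∧ (∀ i ∈ Q, ∀ x ∈ Icc (l i) (u i), ∃ j ∈ N, x ∈ Icc (l j) (u j)) ∧
      ∀ x, ∀ S : Finset ι, S ⊆ N → (∀ i ∈ S, x ∈ Icc (l i) (u i)) → S.card ≤ 2 := by
  classical
  induction' hn : Q.card using Nat.strong_induction_on with n ih generalizing Q
  by_cases hex : ∃ k ∈ Q, ∀ x ∈ Icc (l k) (u k), ∃ j ∈ Q.erase k, x ∈ Icc (l j) (u j)
  · obtain ⟨k, hk, hcov⟩ := hex
    obtain ⟨N, hN, hc, ho⟩ := ih (Q.erase k).card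
      (by rw [← hn]; exact Finset.card_erase_lt_of_mem hk) (Q.erase k) rfl
    refine ⟨N, hN.trans (Finset.erase_subset _ _), ?_, ho⟩
    intro i hi x hx
    by_cases hik : i = k
    · subst hik
      obtain ⟨j, hj, hxj⟩ := hcov x hx
      exact hc j hj x hxj
    · exact hc i (Finset.mem_erase.2 ⟨hik, hi⟩) x hx
  · refine ⟨Q, le_rfl, fun i hi x hx => ⟨i, hi, hx⟩, ?_⟩
    intro x S hS hx
    by_contra hcard
    push Not at hcard
    have hne : S.Nonempty := Finset.card_pos.1 (by omega)
    obtain ⟨p, hp, hpm⟩ := S.exists_min_image l hne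
    obtain ⟨q, hq, hqm⟩ := S.exists_max_image u hne
    obtain ⟨k, hk⟩ : (S \ {p, q}).Nonempty := by
      rw [← Finset.card_pos]
      have h1 := Finset.le_card_sdiff {p, q} S
      have h2 := Finset.card_le_two (a := p) (b := q)
      omega
    simp only [Finset.mem_sdiff, Finset.mem_insert, Finset.mem_singleton, not_or] at hk
    apply hex
    refine ⟨k, hS hk.1, fun y hy => ?_⟩
    have a1 := hpm k hk.1
    have a2 := hqm k hk.1
    have b1 := hx p hp
    have b2 := hx q hq
    simp only [mem_Icc] at *
    rcases le_total y x with hyx | hyx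
    · exact ⟨p, Finset.mem_erase.2 ⟨fun h => hk.2.1 h.symm, hS hp⟩, by linarith, by linarith⟩
    · exact ⟨q, Finset.mem_erase.2 ⟨fun h => hk.2.2 h.symm, hS hq⟩, by linarith, by linarith⟩

/-- The set of points lying in at least `n` of finitely many measurable sets is measurable. -/
theorem aux_measurable_count {ι : Type} (J : Finset ι) (X : ι → Set ℝ)
    (hX : ∀ i ∈ J, MeasurableSet (X i)) (n : ℕ) :
    MeasurableSet {t : ℝ | ∃ S : Finset ι, S ⊆ J ∧ n ≤ S.card ∧ ∀ i ∈ S, t ∈ X i} := by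
  classical
  have : {t : ℝ | ∃ S : Finset ι, S ⊆ J ∧ n ≤ S.card ∧ ∀ i ∈ S, t ∈ X i}
      = ⋃ S ∈ J.powerset.filter (fun S => n ≤ S.card), ⋂ i ∈ S, X i := by
    ext t
    simp only [mem_ofPred_eq, mem_iUnion, mem_iInter, Finset.mem_filter, Finset.mem_powerset,
      exists_prop, and_assoc]
  rw [this]
  refine Finset.measurableSet_biUnion _ fun S hS => Finset.measurableSet_biInter _ fun i hi => ?_
  exact hX i ((Finset.mem_powerset.1 (Finset.mem_filter.1 hS).1) hi)

/-- One growth step. -/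
theorem aux_step {ι : Type} [Nonempty ι] (μ : Measure ℝ) [IsFiniteMeasure μ] (J : Finset ι) (l u : ι → ℝ)
    (δ : ℝ) (hδ : 0 < δ) (a n : ℕ) (ha : 0 < a) (hn : a ≤ n)
    (hgood : ∀ G : Finset ι, G ⊆ J → ∀ V : Set ℝ, MeasurableSet V →
      (∀ i ∈ G, δ * (u i - l i) ≤ μ.real (Icc (l i) (u i) ∩ V)) →
      ∑ i ∈ G, 2 * μ.real (Icc (l i) (u i) ∩ V) ≤ a * μ.real V)
    (S : ℝ → Finset ι) (hSJ : ∀ t, S t ⊆ J)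
    (H : ι → ℝ → Set ℝ) (hHo : ∀ i t, IsOpen (H i t))
    (hHm : ∀ t, ∀ i ∈ S t, u i - l i ≤ 2 * μ.real (H i t))
    (hHn : ∀ t, ∀ i ∈ S t, ∀ k ∈ S t, u i - l i ≤ u k - l k → H i t ⊆ Icc (l k) (u k))
    (A : Set ℝ) (F : ℝ → Set ℝ) (hV : MeasurableSet (⋃ t ∈ A, F t))
    (R : ℝ → Finset ι) (hRS : ∀ t, R t ⊆ S t) (hRc : ∀ t ∈ A, n ≤ (R t).card)
    (hF : ∀ t ∈ A, ∀ i ∈ R t, F t ⊆ Icc (l i) (u i)) :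
    ∃ (A' : Set ℝ) (F' : ℝ → Set ℝ) (R' : ℝ → Finset ι),
      A' ⊆ A ∧ MeasurableSet (⋃ t ∈ A', F' t) ∧ (∀ t, R' t ⊆ S t) ∧
      (∀ t ∈ A', n - a ≤ (R' t).card) ∧
      (∀ t ∈ A', ∀ i ∈ R' t, F' t ⊆ Icc (l i) (u i)) ∧
      μ.real (⋃ t ∈ A, F t) ≤ 8 * δ * μ.real (⋃ t ∈ A', F' t) := by
  classical
  set V := ⋃ t ∈ A, F t with hVdef
  set G := J.filter fun i => δ * (u i - l i) ≤ μ.real (Icc (l i) (u i) ∩ V) with hG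
  set A' := {t ∈ A | (R t ∩ G).card < a} with hA'
  set R' : ℝ → Finset ι := fun t => R t \ G with hR'
  have hne : ∀ t ∈ A', n - a ≤ (R' t).card ∧ (R' t).Nonempty := by
    intro t ht
    have h1 := hRc t ht.1
    have h2 := ht.2
    have h3 := Finset.card_sdiff_add_card_inter (R t) G
    have : n - a + 1 ≤ (R' t).card := by simp only [hR']; omega
    exact ⟨by omega, Finset.card_pos.1 (by omega)⟩
  have hch : ∀ t ∈ A', ∃ i, i ∈ R' t ∧ ∀ k ∈ R' t, u i - l i ≤ u k - l k := by
    intro t ht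
    obtain ⟨i, hi, hm⟩ := (R' t).exists_min_image (fun i => u i - l i) (hne t ht).2
    exact ⟨i, hi, hm⟩
  choose! f hfR hfm using hch
  have hRR : ∀ t, R' t ⊆ R t := fun t => Finset.sdiff_subset
  have hRS' : ∀ t, R' t ⊆ S t := fun t => (hRR t).trans (hRS t)
  have hV' : MeasurableSet (⋃ t ∈ A', H (f t) t) :=
    (isOpen_iUnion fun t => isOpen_iUnion fun _ => hHo _ _).measurableSet
  refine ⟨A', fun t => H (f t) t, R', fun t ht => ht.1, hV', hRS', fun t ht => (hne t ht).1,
    ?_, ?_⟩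
  · intro t ht i hi
    exact hHn t (f t) (hRS' t (hfR t ht)) i (hRS' t hi) (hfm t ht i hi)
  set V' := ⋃ t ∈ A', H (f t) t with hV'def
  set B := {x ∈ V | x ∉ ⋃ t ∈ A', F t} with hB
  have hVle : μ.real V ≤ μ.real (⋃ t ∈ A', F t) + μ.real B := by
    refine (measureReal_mono ?_).trans (measureReal_union_le _ _)
    intro x hx
    by_cases h : x ∈ ⋃ t ∈ A', F t
    · exact Or.inl h
    · exact Or.inr ⟨hx, h⟩
  -- the exceptional part has at most half the measure
  have hBle : 2 * μ.real B ≤ μ.real V := by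
    have h1 := aux_markov μ G (fun i => Icc (l i) (u i) ∩ V)
      (fun i _ => measurableSet_Icc.inter hV) B a (by
        intro x hx
        obtain ⟨t, ht, hxt⟩ := mem_iUnion₂.1 hx.1
        have htA : t ∉ A' := fun h => hx.2 (mem_iUnion₂.2 ⟨t, h, hxt⟩)
        refine ⟨R t ∩ G, Finset.inter_subset_right, ?_, ?_⟩
        · by_contra hlt
          exact htA ⟨ht, not_le.1 hlt⟩
        · intro i hi
          exact ⟨hF t ht i (Finset.mem_inter.1 hi).1 hxt, hx.1⟩)
    have h2 := hgood G (Finset.filter_subset _ _) V hV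
      (fun i hi => (Finset.mem_filter.1 hi).2)
    rw [← Finset.mul_sum] at h2
    have ha' : (0 : ℝ) < a := by exact_mod_cast ha
    have h3 : (a : ℝ) * (2 * μ.real B) ≤ a * μ.real V := by linarith
    exact le_of_mul_le_mul_left h3 ha'
  set Q := J.filter fun i => ∃ t ∈ A', f t = i with hQ
  obtain ⟨N, hNQ, hcov, hov⟩ := aux_minimal_cover Q l u
  have hw : ∀ i ∈ N, ∃ t ∈ A', f t = i := fun i hi => (Finset.mem_filter.1 (hNQ hi)).2
  choose! τ hτA hτf using hw
  have hτR : ∀ i ∈ N, i ∈ R' (τ i) := by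
    intro i hi
    have := hfR (τ i) (hτA i hi)
    rwa [hτf i hi] at this
  have hmain : μ.real (⋃ t ∈ A', F t) ≤ ∑ i ∈ N, μ.real (Icc (l i) (u i) ∩ V) := by
    refine (measureReal_mono ?_ (measure_ne_top _ _)).trans (measureReal_biUnion_finset_le N _)
    intro x hx
    obtain ⟨t, ht, hxt⟩ := mem_iUnion₂.1 hx
    have hft := hfR t ht
    have hxI := hF t ht.1 (f t) (hRR t hft) hxt
    obtain ⟨j, hj, hxj⟩ := hcov (f t)
      (Finset.mem_filter.2 ⟨hSJ t (hRS' t hft), t, ht, rfl⟩) x hxI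
    exact mem_iUnion₂.2 ⟨j, hj, hxj, mem_iUnion₂.2 ⟨t, ht.1, hxt⟩⟩
  have hbad : ∀ i ∈ N, μ.real (Icc (l i) (u i) ∩ V) ≤ 2 * δ * μ.real (H i (τ i)) := by
    intro i hi
    have h1 : i ∉ G := (Finset.mem_sdiff.1 (hτR i hi)).2
    have h2 : i ∈ J := (Finset.mem_filter.1 (hNQ hi)).1
    have h3 : ¬ (δ * (u i - l i) ≤ μ.real (Icc (l i) (u i) ∩ V)) :=
      fun h => h1 (Finset.mem_filter.2 ⟨h2, h⟩)
    have h4 := mul_le_mul_of_nonneg_left (hHm (τ i) i (hRS' _ (hτR i hi))) hδ.le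
    linarith [not_le.1 h3]
  have hover : ∑ i ∈ N, μ.real (H i (τ i)) ≤ (2 : ℕ) * μ.real V' := by
    apply aux_overlap μ N _ (fun i _ => (hHo _ _).measurableSet) V' hV'
    · intro i hi x hx
      refine mem_iUnion₂.2 ⟨τ i, hτA i hi, ?_⟩
      rwa [hτf i hi]
    · intro x T hT hx
      refine hov x T hT fun i hi => ?_
      have hiS := hRS' _ (hτR i (hT hi))
      exact hHn (τ i) i hiS i hiS le_rfl (hx i hi)
  have hsum : ∑ i ∈ N, μ.real (Icc (l i) (u i) ∩ V) ≤ 2 * δ * ∑ i ∈ N, μ.real (H i (τ i)) := by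
    rw [Finset.mul_sum]
    exact Finset.sum_le_sum hbad
  have h5 := mul_le_mul_of_nonneg_left hover (by positivity : (0 : ℝ) ≤ 2 * δ)
  push_cast at h5
  linarith

/-- Iterating the growth step. -/
theorem aux_iterate {ι : Type} [Nonempty ι] (μ : Measure ℝ) [IsFiniteMeasure μ]
    (J : Finset ι) (l u : ι → ℝ)
    (δ : ℝ) (hδ : 0 < δ) (a K : ℕ) (ha : 0 < a)
    (hgood : ∀ G : Finset ι, G ⊆ J → ∀ V : Set ℝ, MeasurableSet V →
      (∀ i ∈ G, δ * (u i - l i) ≤ μ.real (Icc (l i) (u i) ∩ V)) →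
      ∑ i ∈ G, 2 * μ.real (Icc (l i) (u i) ∩ V) ≤ a * μ.real V)
    (S : ℝ → Finset ι) (hSJ : ∀ t, S t ⊆ J)
    (hSI : ∀ t, ∀ i ∈ S t, t ∈ Icc (l i) (u i))
    (H : ι → ℝ → Set ℝ) (hHo : ∀ i t, IsOpen (H i t))
    (hHm : ∀ t, ∀ i ∈ S t, u i - l i ≤ 2 * μ.real (H i t))
    (hHn : ∀ t, ∀ i ∈ S t, ∀ k ∈ S t, u i - l i ≤ u k - l k → H i t ⊆ Icc (l k) (u k))
    (T : Set ℝ) (hT : MeasurableSet T) (hc : ∀ t ∈ T, K * a ≤ (S t).card) :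
    μ.real T ≤ (8 * δ) ^ K * μ.real univ := by
  have key : ∀ k, k ≤ K → ∃ (A : Set ℝ) (F : ℝ → Set ℝ) (R : ℝ → Finset ι),
      MeasurableSet (⋃ t ∈ A, F t) ∧ (∀ t, R t ⊆ S t) ∧
      (∀ t ∈ A, (K - k) * a ≤ (R t).card) ∧
      (∀ t ∈ A, ∀ i ∈ R t, F t ⊆ Icc (l i) (u i)) ∧
      μ.real T ≤ (8 * δ) ^ k * μ.real (⋃ t ∈ A, F t) := by
    intro k
    induction k with
    | zero =>
      intro _
      refine ⟨T, fun t => {t}, S, ?_, fun t => le_rfl, by simpa using hc, ?_, ?_⟩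
      · simpa using hT
      · intro t _ i hi
        simpa using hSI t i hi
      · simp
    | succ k ih =>
      intro hk
      obtain ⟨A, F, R, hV, hRS, hRc, hF, hm⟩ := ih (by omega)
      have hsub : (K - k) * a - a = (K - (k + 1)) * a := by
        rw [← Nat.sub_sub, Nat.sub_mul (K - k), one_mul]
      obtain ⟨A', F', R', -, hV', hRS', hRc', hF', hm'⟩ := aux_step μ J l u δ hδ a
        ((K - k) * a) ha (Nat.le_mul_of_pos_left a (by omega)) hgood S hSJ H hHo hHm hHn A F hV R
        hRS hRc hF
      refine ⟨A', F', R', hV', hRS', by rwa [hsub] at hRc', hF', ?_⟩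
      calc μ.real T ≤ (8 * δ) ^ k * μ.real (⋃ t ∈ A, F t) := hm
        _ ≤ (8 * δ) ^ k * (8 * δ * μ.real (⋃ t ∈ A', F' t)) := by gcongr
        _ = _ := by ring
  obtain ⟨A, F, R, -, -, -, -, hm⟩ := key K le_rfl
  exact hm.trans (mul_le_mul_of_nonneg_left (measureReal_mono (subset_univ _)) (by positivity))

/-- The bound for good jobs, for any threshold. -/
theorem aux_good {ι : Type} (μ : Measure ℝ) [IsFiniteMeasure μ] (J : Finset ι) (l u lax : ι → ℝ)
    (hlen : ∀ i ∈ J, μ.real (Icc (l i) (u i)) = u i - l i) (ms : ℕ) (lam δ : ℝ)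
    (hlam : lam ≤ 1 / 2)
    (hδc : lam ≤ δ / 2 ∨ 1 / 64 ≤ δ)
    (hlax : ∀ i ∈ J, lax i ≤ lam * (u i - l i))
    (hcon : ∀ G : Finset ι, G ⊆ J → ∀ W : Set ℝ, MeasurableSet W →
      ∑ i ∈ G, μ.real (Icc (l i) (u i) ∩ W) ≤ ms * μ.real W + ∑ i ∈ G, lax i)
    (G : Finset ι) (hG : G ⊆ J) (V : Set ℝ) (hV : MeasurableSet V)
    (hgd : ∀ i ∈ G, δ * (u i - l i) ≤ μ.real (Icc (l i) (u i) ∩ V)) :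
    ∑ i ∈ G, 2 * μ.real (Icc (l i) (u i) ∩ V) ≤ (512 * ms : ℕ) * μ.real V := by
  have hV0 : 0 ≤ (ms : ℝ) * μ.real V := by positivity
  have hl0 : ∀ i ∈ J, 0 ≤ u i - l i := fun i hi => by
    rw [← hlen i hi]; exact measureReal_nonneg
  rw [← Finset.mul_sum]
  push_cast
  rcases hδc with h | h
  · have h1 := hcon G hG V hV
    have h2 : ∑ i ∈ G, lax i ≤ ∑ i ∈ G, (1 / 2) * μ.real (Icc (l i) (u i) ∩ V) := by
      refine Finset.sum_le_sum fun i hi => ?_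
      have := mul_le_mul_of_nonneg_right h (hl0 i (hG hi))
      linarith [hlax i (hG hi), hgd i hi]
    rw [← Finset.mul_sum] at h2
    linarith
  · obtain ⟨N, hNG, hcov, hov⟩ := aux_minimal_cover G l u
    set W := ⋃ i ∈ N, Icc (l i) (u i) with hW
    have hWm : MeasurableSet W := Finset.measurableSet_biUnion _ fun i _ => measurableSet_Icc
    have hWle : μ.real W ≤ 128 * μ.real V := by
      have h1 : μ.real W ≤ ∑ i ∈ N, μ.real (Icc (l i) (u i)) :=
        measureReal_biUnion_finset_le N _
      have h2 : ∑ i ∈ N, μ.real (Icc (l i) (u i))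
          ≤ ∑ i ∈ N, 64 * μ.real (Icc (l i) (u i) ∩ V) := by
        refine Finset.sum_le_sum fun i hi => ?_
        rw [hlen i (hG (hNG hi))]
        have := mul_le_mul_of_nonneg_right h (hl0 i (hG (hNG hi)))
        linarith [hgd i (hNG hi)]
      have h3 := aux_overlap μ N (fun i => Icc (l i) (u i) ∩ V)
        (fun i _ => measurableSet_Icc.inter hV) V hV (fun i _ => inter_subset_right) 2
        (fun x S hS hx => hov x S hS fun i hi => (hx i hi).1)
      rw [← Finset.mul_sum] at h2
      push_cast at h3
      linarith
    have h1 := hcon G hG W hWm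
    have h2 : ∀ i ∈ G, μ.real (Icc (l i) (u i) ∩ W) = u i - l i := by
      intro i hi
      rw [← hlen i (hG hi), inter_eq_left.2]
      intro x hx
      obtain ⟨j, hj, hxj⟩ := hcov i hi x hx
      exact mem_iUnion₂.2 ⟨j, hj, hxj⟩
    rw [Finset.sum_congr rfl h2] at h1
    have h3 : ∑ i ∈ G, lax i ≤ ∑ i ∈ G, (1 / 2) * (u i - l i) := by
      refine Finset.sum_le_sum fun i hi => ?_
      have := mul_le_mul_of_nonneg_right hlam (hl0 i (hG hi))
      linarith [hlax i (hG hi)]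
    have h4 : ∑ i ∈ G, μ.real (Icc (l i) (u i) ∩ V) ≤ ∑ i ∈ G, (u i - l i) := by
      refine Finset.sum_le_sum fun i hi => ?_
      rw [← hlen i (hG hi)]
      exact measureReal_mono inter_subset_left
    rw [← Finset.mul_sum] at h3
    have h5 := mul_le_mul_of_nonneg_left hWle (Nat.cast_nonneg (α := ℝ) ms)
    linarith

end Core

/-- Choice of the threshold `δ` and of the number of steps `K`. -/
theorem aux_numeric (lam₁ lam₂ : ℝ) (h1 : 0 < lam₁) (h12 : lam₁ ≤ lam₂) (h2 : lam₂ ≤ 1 / 2) :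
    ∃ (δ : ℝ) (K : ℕ), 0 < δ ∧ (lam₂ ≤ δ / 2 ∨ 1 / 64 ≤ δ) ∧ (8 * δ) ^ K * 10 < lam₁ ∧
      (K : ℝ) ≤ 28 * (1 + Real.log (lam₂ / lam₁) / Real.log (1 / lam₂)) := by
  have h20 : 0 < lam₂ := h1.trans_le h12
  obtain ⟨δ, hδ, hδc, hδ4⟩ : ∃ δ : ℝ, 0 < δ ∧ (lam₂ ≤ δ / 2 ∨ 1 / 64 ≤ δ) ∧
      (8 * δ) ^ 4 ≤ lam₂ := by
    by_cases hs : lam₂ ≤ 1 / 4096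
    · have hsq : √lam₂ * √lam₂ = lam₂ := Real.mul_self_sqrt h20.le
      have hp : 0 < √lam₂ := Real.sqrt_pos.2 h20
      have hle : √lam₂ ≤ 1 / 64 := by
        rw [Real.sqrt_le_left (by norm_num)]
        norm_num
        linarith
      refine ⟨√lam₂, hp, Or.inl ?_, ?_⟩
      · nlinarith
      · have : (8 * √lam₂) ^ 4 = 4096 * (lam₂ * lam₂) := by
          calc (8 * √lam₂) ^ 4 = 4096 * ((√lam₂ * √lam₂) * (√lam₂ * √lam₂)) := by ring
            _ = _ := by rw [hsq]
        rw [this]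
        nlinarith
    · refine ⟨1 / 64, by norm_num, Or.inr le_rfl, ?_⟩
      norm_num
      linarith
  have hL : 0 < Real.log (1 / lam₂) := by
    apply Real.log_pos
    rw [lt_div_iff₀ h20]
    linarith
  set R := Real.log (lam₂ / lam₁) / Real.log (1 / lam₂) with hR
  have hR0 : 0 ≤ R := by
    apply div_nonneg _ hL.le
    apply Real.log_nonneg
    rwa [le_div_iff₀ h1, one_mul]
  refine ⟨δ, 4 * (⌈R⌉₊ + 6), hδ, hδc, ?_, ?_⟩
  · have hpow : (8 * δ) ^ (4 * (⌈R⌉₊ + 6)) ≤ lam₂ ^ (⌈R⌉₊ + 6) := by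
      rw [pow_mul]
      exact pow_le_pow_left₀ (by positivity) hδ4 _
    have hcl : lam₂ ^ ⌈R⌉₊ ≤ lam₁ / lam₂ := by
      rw [← Real.log_le_log_iff (by positivity) (by positivity), Real.log_pow]
      have e1 : Real.log (1 / lam₂) = - Real.log lam₂ := by rw [one_div, Real.log_inv]
      have e2 : Real.log (lam₁ / lam₂) = - Real.log (lam₂ / lam₁) := by
        rw [← Real.log_inv, inv_div]
      have e3 : R * Real.log (1 / lam₂) = Real.log (lam₂ / lam₁) := div_mul_cancel₀ _ hL.ne'
      have e4 := mul_le_mul_of_nonneg_right (Nat.le_ceil R) hL.le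
      rw [e2, ← e3]
      rw [e1] at e4 ⊢
      linarith
    have h5 : lam₂ ^ 5 ≤ 1 / 32 := by
      calc lam₂ ^ 5 ≤ (1 / 2) ^ 5 := pow_le_pow_left₀ h20.le h2 _
        _ = 1 / 32 := by norm_num
    have h6 : lam₂ ^ (⌈R⌉₊ + 6) ≤ lam₁ * (1 / 32) := by
      calc lam₂ ^ (⌈R⌉₊ + 6) = lam₂ ^ ⌈R⌉₊ * lam₂ ^ 6 := pow_add _ _ _
        _ ≤ lam₁ / lam₂ * lam₂ ^ 6 := by gcongr
        _ = lam₁ * lam₂ ^ 5 := by field_simp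
        _ ≤ _ := by gcongr
    linarith
  · have := Nat.ceil_lt_add_one hR0
    push_cast
    linarith

/-- Processing only while alive never exceeds the size. -/
theorem aux_volume_le {ι : Type} (job : ι → Job) (P : ι → Set ℝ) (j : ι)
    (hsub : P j ⊆ (job j).lifespan) (hal : ∀ t ∈ P j, Alive job P j t) :
    volume (P j) ≤ ENNReal.ofReal (job j).p := by
  rcases (P j).eq_empty_or_nonempty with he | hne
  · simp [he]
  have hbdd : BddAbove (P j) := ⟨(job j).d, fun t ht => (hsub ht).2⟩
  set s := sSup (P j) with hs
  have hlub : IsLUB (P j) s := isLUB_csSup hne hbdd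
  obtain ⟨v, hvm, -, hvt, hv⟩ := hlub.exists_seq_monotone_tendsto hne
  have hcov : P j ⊆ (⋃ n, P j ∩ Ico (job j).r (v n)) ∪ {s} := by
    intro t ht
    rcases (hlub.1 ht).lt_or_eq with hlt | heq
    · left
      obtain ⟨n, hn⟩ := (hvt.eventually (lt_mem_nhds hlt)).exists
      exact mem_iUnion.2 ⟨n, ht, (hsub ht).1, hn⟩
    · right
      exact heq
  calc volume (P j) ≤ volume ((⋃ n, P j ∩ Ico (job j).r (v n)) ∪ {s}) := measure_mono hcov
    _ ≤ volume (⋃ n, P j ∩ Ico (job j).r (v n)) + volume {s} := measure_union_le _ _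
    _ = volume (⋃ n, P j ∩ Ico (job j).r (v n)) := by simp
    _ = ⨆ n, volume (P j ∩ Ico (job j).r (v n)) := by
        apply Monotone.measure_iUnion
        intro a b hab
        exact inter_subset_inter_right _ (Ico_subset_Ico_right (hvm hab))
    _ ≤ _ := iSup_le fun n => (hal _ (hv n)).2.le

/-- Contribution bound coming from feasibility. -/
theorem aux_contribution {ι : Type} (J : Finset ι) (job : ι → Job) (ms : ℕ)
    (hfeas : FeasibleOn J job ms) (x y : ℝ) (G : Finset ι) (hG : G ⊆ J)
    (hGW : ∀ i ∈ G, Icc (job i).r (job i).d ⊆ Icc x y) (W : Set ℝ) (hW : MeasurableSet W) :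
    ∑ i ∈ G, (volume.restrict (Icc x y)).real (Icc (job i).r (job i).d ∩ W)
      ≤ ms * (volume.restrict (Icc x y)).real W + ∑ i ∈ G, (job i).laxity := by
  obtain ⟨Q, ⟨hQm, hQs, hQc⟩, hQv⟩ := hfeas
  set μ := volume.restrict (Icc x y) with hμ
  have h1 : ∀ i ∈ G, μ.real (Icc (job i).r (job i).d ∩ W)
      ≤ μ.real (Q i ∩ W) + (job i).laxity := by
    intro i hi
    have hsub : Q i ⊆ Icc (job i).r (job i).d := hQs i (hG hi)
    have hm := hQm i (hG hi)
    have hlax : μ.real (Icc (job i).r (job i).d \ Q i) = (job i).laxity := by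
      rw [measureReal_sdiff hsub hm]
      have e1 : μ.real (Q i) = (job i).p := by
        rw [hμ, measureReal_restrict_apply hm, inter_eq_left.2 (hsub.trans (hGW i hi)),
          Measure.real, hQv i (hG hi), ENNReal.toReal_ofReal (job i).p_pos.le]
      have e2 : μ.real (Icc (job i).r (job i).d) = (job i).d - (job i).r := by
        rw [hμ, measureReal_restrict_apply measurableSet_Icc, inter_eq_left.2 (hGW i hi),
          Real.volume_real_Icc_of_le]
        linarith [(job i).p_pos, (job i).fits]
      rw [e1, e2, Job.laxity]
    rw [← hlax]
    refine (measureReal_mono ?_).trans (measureReal_union_le _ _)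
    intro t ht
    by_cases hq : t ∈ Q i
    · exact Or.inl ⟨hq, ht.2⟩
    · exact Or.inr ⟨ht.1, hq⟩
  have h2 := aux_overlap μ G (fun i => Q i ∩ W) (fun i hi => (hQm i (hG hi)).inter hW) W hW
    (fun i _ => inter_subset_right) ms
    (fun t S hS hx => hQc t S (hS.trans hG) fun i hi => (hx i hi).1)
  calc _ ≤ ∑ i ∈ G, (μ.real (Q i ∩ W) + (job i).laxity) := Finset.sum_le_sum h1
    _ = ∑ i ∈ G, μ.real (Q i ∩ W) + ∑ i ∈ G, (job i).laxity := Finset.sum_add_distrib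
    _ ≤ _ := by linarith

/-- SJF is `O(log_{1/λ₂}(λ₂/λ₁))`-machine optimal on jobs with relative laxities in
`[λ₁, λ₂] ⊆ (0, 1/2]`: there is an absolute constant `C > 0` such that if the instance is
feasible on `m*` machines and `m ≥ C·m*·(1 + log(λ₂/λ₁)/log(1/λ₂))`, then every SJF schedule
on `m` machines completes every job. -/
theorem sjf_machine_optimal :
    ∃ C : ℝ, 0 < C ∧
      ∀ (ι : Type) (J : Finset ι) (job : ι → Job) (lam₁ lam₂ : ℝ) (mstar m : ℕ),
        0 < lam₁ → lam₁ ≤ lam₂ → lam₂ ≤ 1 / 2 →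
        (∀ j ∈ J, lam₁ * (job j).len ≤ (job j).laxity ∧ (job j).laxity ≤ lam₂ * (job j).len) →
        FeasibleOn J job mstar →
        C * mstar * (1 + Real.log (lam₂ / lam₁) / Real.log (1 / lam₂)) ≤ (m : ℝ) →
        ∀ P : ι → Set ℝ, IsSJFSchedule J job m P →
          ∀ j ∈ J, volume (P j) = ENNReal.ofReal (job j).p := by
  classical
  refine ⟨28672, by norm_num, ?_⟩
  intro ι J job lam₁ lam₂ ms m h1 h12 h2 hlax hfeas hm P ⟨⟨hPm, hPs, hPc⟩, hal, hsjf⟩ j hj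
  by_contra hne
  have hlt : volume (P j) < ENNReal.ofReal (job j).p :=
    lt_of_le_of_ne (aux_volume_le job P j (hPs j hj) (hal j hj)) hne
  have : Nonempty ι := ⟨j⟩
  have hms : 0 < ms := by
    obtain ⟨Q, ⟨hQm, hQs, hQc⟩, hQv⟩ := hfeas
    have : volume (Q j) ≠ 0 := by
      rw [hQv j hj]
      simpa using (job j).p_pos
    obtain ⟨t, ht⟩ := nonempty_of_measure_ne_zero this
    have := hQc t {j} (by simpa using hj) (by simpa using ht)
    rw [Finset.card_singleton] at this
    omega
  obtain ⟨δ, K, hδ, hδc, hK, hKle⟩ := aux_numeric lam₁ lam₂ h1 h12 h2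
  set a := 512 * ms with ha
  have hKm : 2 * (K * a) ≤ m := by
    have : ((2 * (K * a) : ℕ) : ℝ) ≤ m := by
      refine le_trans ?_ hm
      rw [ha]
      push_cast
      have := mul_le_mul_of_nonneg_left hKle (by positivity : (0 : ℝ) ≤ 1024 * ms)
      linarith
    exact_mod_cast this
  set L := (job j).len with hL
  have hL' : L = (job j).d - (job j).r := rfl
  have hpj := (job j).p_pos
  have hfj := (job j).fits
  have hLpos : 0 < L := by linarith
  set x := (job j).r - 2 * L with hx
  set y := (job j).d + 2 * L with hy
  set μ := volume.restrict (Icc x y) with hμ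
  have : IsFiniteMeasure μ := by rw [hμ]; infer_instance
  set J' := J.filter fun i => Icc (job i).r (job i).d ⊆ Icc x y with hJ'
  have hJ'J : J' ⊆ J := Finset.filter_subset _ _
  have hJ'w : ∀ i ∈ J', Icc (job i).r (job i).d ⊆ Icc x y := fun i hi =>
    (Finset.mem_filter.1 hi).2
  have hlen : ∀ i ∈ J', μ.real (Icc (job i).r (job i).d) = (job i).d - (job i).r := by
    intro i hi
    rw [hμ, measureReal_restrict_apply measurableSet_Icc, inter_eq_left.2 (hJ'w i hi),
      Real.volume_real_Icc_of_le]
    linarith [(job i).p_pos, (job i).fits]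
  have hgood := aux_good μ J' (fun i => (job i).r) (fun i => (job i).d)
    (fun i => (job i).laxity) hlen ms lam₂ δ h2 hδc (fun i hi => (hlax i (hJ'J hi)).2)
    (fun G hG W hW => aux_contribution J job ms hfeas x y G (hG.trans hJ'J)
      (fun i hi => hJ'w i (hG hi)) W hW)
  have huniv : μ.real univ = 5 * L := by
    rw [hμ, measureReal_restrict_apply MeasurableSet.univ, univ_inter,
      Real.volume_real_Icc_of_le (by linarith)]
    linarith
  have hIoo : ∀ b c : ℝ, b ≤ c → Ioo b c ⊆ Icc x y → μ.real (Ioo b c) = c - b := by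
    intro b c hbc hs
    rw [hμ, measureReal_restrict_apply measurableSet_Ioo, inter_eq_left.2 hs,
      Real.volume_real_Ioo_of_le hbc]
  have hapos : 0 < a := by omega
  -- right-leaning and left-leaning job sets
  set XR : ι → Set ℝ := fun i => Icc (job i).r (((job i).r + (job i).d) / 2) with hXR
  set XL : ι → Set ℝ := fun i => Icc (((job i).r + (job i).d) / 2) (job i).d with hXL
  set TR : Set ℝ := {t | ∃ S : Finset ι, S ⊆ J' ∧ K * a ≤ S.card ∧ ∀ i ∈ S, t ∈ XR i} with hTR
  set TL : Set ℝ := {t | ∃ S : Finset ι, S ⊆ J' ∧ K * a ≤ S.card ∧ ∀ i ∈ S, t ∈ XL i} with hTL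
  have hpos : ∀ i, (job i).r < (job i).d := fun i => by
    linarith [(job i).p_pos, (job i).fits]
  have hR : μ.real TR ≤ (8 * δ) ^ K * μ.real univ := by
    refine aux_iterate μ J' (fun i => (job i).r) (fun i => (job i).d) δ hδ a K hapos hgood
      (fun t => J'.filter fun i => t ∈ XR i) (fun t => Finset.filter_subset _ _) ?_
      (fun i t => Ioo t (t + ((job i).d - (job i).r) / 2)) (fun i t => isOpen_Ioo) ?_ ?_ TR
      (aux_measurable_count _ _ (fun i _ => measurableSet_Icc) _) ?_
    · intro t i hi
      have := (Finset.mem_filter.1 hi).2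
      simp only [hXR, mem_Icc] at this ⊢
      have := hpos i
      constructor <;> linarith
    · intro t i hi
      obtain ⟨hiJ, hit⟩ := Finset.mem_filter.1 hi
      simp only [hXR, mem_Icc] at hit
      have := hpos i
      rw [hIoo _ _ (by linarith)]
      · linarith
      · refine Subset.trans ?_ (hJ'w i hiJ)
        intro s hs
        exact ⟨by linarith [hs.1], by linarith [hs.2]⟩
    · intro t i hi k hk hik s hs
      have hkt := (Finset.mem_filter.1 hk).2
      simp only [hXR, mem_Icc] at hkt
      exact ⟨by linarith [hs.1], by linarith [hs.2]⟩
    · rintro t ⟨S, hS, hc, hm'⟩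
      exact hc.trans (Finset.card_le_card fun i hi => Finset.mem_filter.2 ⟨hS hi, hm' i hi⟩)
  have hLf : μ.real TL ≤ (8 * δ) ^ K * μ.real univ := by
    refine aux_iterate μ J' (fun i => (job i).r) (fun i => (job i).d) δ hδ a K hapos hgood
      (fun t => J'.filter fun i => t ∈ XL i) (fun t => Finset.filter_subset _ _) ?_
      (fun i t => Ioo (t - ((job i).d - (job i).r) / 2) t) (fun i t => isOpen_Ioo) ?_ ?_ TL
      (aux_measurable_count _ _ (fun i _ => measurableSet_Icc) _) ?_
    · intro t i hi
      have := (Finset.mem_filter.1 hi).2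
      simp only [hXL, mem_Icc] at this ⊢
      have := hpos i
      constructor <;> linarith
    · intro t i hi
      obtain ⟨hiJ, hit⟩ := Finset.mem_filter.1 hi
      simp only [hXL, mem_Icc] at hit
      have := hpos i
      rw [hIoo _ _ (by linarith)]
      · linarith
      · refine Subset.trans ?_ (hJ'w i hiJ)
        intro s hs
        exact ⟨by linarith [hs.1], by linarith [hs.2]⟩
    · intro t i hi k hk hik s hs
      have hkt := (Finset.mem_filter.1 hk).2
      simp only [hXL, mem_Icc] at hkt
      exact ⟨by linarith [hs.1], by linarith [hs.2]⟩
    · rintro t ⟨S, hS, hc, hm'⟩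
      exact hc.trans (Finset.card_le_card fun i hi => Finset.mem_filter.2 ⟨hS hi, hm' i hi⟩)
  -- the delay set
  have hsubw : Ico (job j).r (job j).d ⊆ Icc x y := fun t ht =>
    ⟨by linarith [ht.1], by linarith [ht.2]⟩
  have hdelay : μ.real (Ico (job j).r (job j).d \ P j) ≤ μ.real (TR ∪ TL) := by
    apply ENNReal.toReal_mono (measure_ne_top _ _)
    apply measure_mono_ae
    have hae : ∀ᵐ t ∂μ, _ := ae_restrict_of_ae hsjf
    filter_upwards [hae] with t ht htD
    obtain ⟨htI, htP⟩ := htD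
    obtain ⟨S, hSJ, hSc, hS⟩ := ht j hj
      ⟨htI, (measure_mono inter_subset_left).trans_lt hlt⟩ htP
    have hSJ' : S ⊆ J' := by
      intro i hi
      refine Finset.mem_filter.2 ⟨hSJ hi, ?_⟩
      obtain ⟨-, ⟨hti, -⟩, hpi⟩ := hS i hi
      have hl := (hlax i (hSJ hi)).2
      have hp := hpos i
      have h3 := mul_le_mul_of_nonneg_right h2 (sub_nonneg.2 hp.le)
      simp only [Job.laxity, Job.len] at hl
      have hb : (job i).d - (job i).r ≤ 2 * L := by linarith
      intro s hs
      have := hti.1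
      have := hti.2
      have := htI.1
      have := htI.2
      exact ⟨by linarith [hs.1], by linarith [hs.2]⟩
    have hcard := Finset.card_filter_add_card_filter_not (s := S) (fun i => t ∈ XR i)
    rcases le_or_gt (K * a) (S.filter fun i => t ∈ XR i).card with hc | hc
    · left
      exact ⟨_, (Finset.filter_subset _ _).trans hSJ', hc, fun i hi => (Finset.mem_filter.1 hi).2⟩
    · right
      refine ⟨S.filter fun i => ¬ t ∈ XR i, (Finset.filter_subset _ _).trans hSJ', by omega, ?_⟩
      intro i hi
      obtain ⟨hiS, hit⟩ := Finset.mem_filter.1 hi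
      obtain ⟨-, ⟨hti, -⟩, -⟩ := hS i hiS
      simp only [hXR, hXL, mem_Icc, not_and, not_le] at hit ⊢
      exact ⟨(hit hti.1).le, hti.2.le⟩
  have hlow : lam₁ * L ≤ μ.real (Ico (job j).r (job j).d \ P j) := by
    have e1 : μ.real (Ico (job j).r (job j).d) = L := by
      rw [hμ, measureReal_restrict_apply measurableSet_Ico, inter_eq_left.2 hsubw,
        Real.volume_real_Ico_of_le (hpos j).le, hL']
    have e2 : μ.real (P j) ≤ (job j).p := by
      have : μ (P j) ≤ ENNReal.ofReal (job j).p :=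
        (Measure.restrict_apply_le _ _).trans hlt.le
      have := ENNReal.toReal_mono ENNReal.ofReal_ne_top this
      rwa [ENNReal.toReal_ofReal hpj.le] at this
    have e3 : μ.real (Ico (job j).r (job j).d)
        ≤ μ.real (Ico (job j).r (job j).d \ P j) + μ.real (P j) := by
      refine (measureReal_mono ?_).trans (measureReal_union_le _ _)
      intro t ht
      by_cases h : t ∈ P j
      · exact Or.inr h
      · exact Or.inl ⟨ht, h⟩
    have e4 := (hlax j hj).1
    simp only [Job.laxity] at e4
    linarith
  have hun := measureReal_union_le (μ := μ) TR TL
  rw [huniv] at hR hLf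
  have hfin := mul_lt_mul_of_pos_right hK hLpos
  linarith
end

section
/- Let ρ ∈ (0,1], let J be a finite set of jobs each with relative laxity at least ρ, and suppose J is feasible on m* machines. If m ≥ m*/ρ², then every EDF schedule of J on m machines completes every job by its deadline, i.e. |P_j| = p_j for all j ∈ J. In words: EDF is 1/ρ²-machine optimal when all jobs have relative laxity at least ρ. -/
open MeasureTheory Set

/-- `P` is an EDF (Earliest Deadline First) schedule of the jobs `J` on `m` machines: it is a
schedule, jobs are processed only while alive, and for almost every time `t`, if some job is
alive but not processed at `t`, then `m` alive jobs with deadlines at most its deadline are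
processed at `t`. -/
def IsEDFSchedule {ι : Type*} (J : Finset ι) (job : ι → Job) (m : ℕ) (P : ι → Set ℝ) : Prop :=
  IsSchedule J job m P ∧
  (∀ j ∈ J, ∀ t ∈ P j, Alive job P j t) ∧
  (∀ᵐ t : ℝ ∂volume, ∀ j ∈ J, Alive job P j t → t ∉ P j →
    ∃ S : Finset ι, S ⊆ J ∧ S.card = m ∧
      ∀ i ∈ S, t ∈ P i ∧ Alive job P i t ∧ (job i).d ≤ (job j).d)


namespace EDFProof

/-- Work done before time `t`. -/
noncomputable def Wk (P : Set ℝ) (t : ℝ) : ℝ := volume.real (P ∩ Set.Iio t)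

lemma Wk_sub {P : Set ℝ} (hfin : volume P ≠ ⊤) {u t : ℝ} (hut : u ≤ t) :
    Wk P t = Wk P u + volume.real (P ∩ Set.Ico u t) := by
  unfold Wk
  have h := measureReal_inter_add_diff (μ := volume) (s := P ∩ Set.Iio t) (t := Set.Iio u)
    measurableSet_Iio (h := measure_ne_top_of_subset Set.inter_subset_left hfin)
  rw [← h]
  congr 2
  · ext x; simp only [Set.mem_inter_iff, Set.mem_Iio]; constructor
    · rintro ⟨⟨a, b⟩, c⟩; exact ⟨a, c⟩
    · rintro ⟨a, b⟩; exact ⟨⟨a, by linarith⟩, b⟩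
  · ext x; simp only [Set.mem_inter_iff, Set.mem_Iio, Set.mem_diff, Set.mem_Ico, not_lt]; tauto

lemma Wk_mono {P : Set ℝ} (hfin : volume P ≠ ⊤) {u t : ℝ} (hut : u ≤ t) : Wk P u ≤ Wk P t := by
  rw [Wk_sub hfin hut]; linarith [measureReal_nonneg (μ := volume) (s := P ∩ Set.Ico u t)]

lemma Wk_cont {P : Set ℝ} (hfin : volume P ≠ ⊤) : Continuous (Wk P) := by
  apply LipschitzWith.continuous (K := 1)
  apply LipschitzWith.of_le_add
  intro x y
  rcases le_total x y with h | h
  · have := Wk_mono hfin h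
    have := dist_nonneg (x := x) (y := y)
    linarith
  · rw [Wk_sub hfin h, Real.dist_eq, abs_of_nonneg (by linarith)]
    have : volume.real (P ∩ Set.Ico y x) ≤ volume.real (Set.Ico y x) :=
      measureReal_mono Set.inter_subset_right (by simp)
    rw [Real.volume_real_Ico_of_le h] at this
    linarith

lemma Wk_le {P : Set ℝ} (hfin : volume P ≠ ⊤) (t : ℝ) : Wk P t ≤ volume.real P :=
  measureReal_mono Set.inter_subset_left hfin

open Classical in
lemma sum_eq {ι : Type*} (R : Finset ι) (P : ι → Set ℝ) (hP : ∀ j ∈ R, MeasurableSet (P j))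
    (E : Set ℝ) (hfin : volume E ≠ ⊤) :
    IntegrableOn (fun t => ((R.filter (fun j => t ∈ P j)).card : ℝ)) E ∧
    ∑ j ∈ R, volume.real (P j ∩ E) = ∫ t in E, ((R.filter (fun j => t ∈ P j)).card : ℝ) := by
  have e : (fun t => ((R.filter (fun j => t ∈ P j)).card : ℝ)) =
      fun t => ∑ j ∈ R, (P j).indicator (1 : ℝ → ℝ) t := by
    funext t
    rw [Finset.card_filter]
    push_cast
    apply Finset.sum_congr rfl
    intro j _
    simp [Set.indicator_apply]
  haveI : IsFiniteMeasure (volume.restrict E) := ⟨by simpa using lt_top_iff_ne_top.2 hfin⟩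
  have hi : ∀ j ∈ R, Integrable ((P j).indicator (1 : ℝ → ℝ)) (volume.restrict E) := by
    intro j hj
    exact (integrable_const (1 : ℝ)).indicator (hP j hj)
  rw [e]
  refine ⟨integrable_finset_sum R hi, ?_⟩
  rw [integral_finset_sum R hi]
  apply Finset.sum_congr rfl
  intro j hj
  rw [integral_indicator_one (hP j hj), measureReal_restrict_apply (hP j hj)]

open Classical in
lemma sum_ge {ι : Type*} (R : Finset ι) (P : ι → Set ℝ) (hP : ∀ j ∈ R, MeasurableSet (P j))
    (E : Set ℝ) (hE : MeasurableSet E) (hfin : volume E ≠ ⊤) (K : ℝ)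
    (h : ∀ᵐ t : ℝ ∂volume, t ∈ E → K ≤ ((R.filter (fun j => t ∈ P j)).card : ℝ)) :
    K * volume.real E ≤ ∑ j ∈ R, volume.real (P j ∩ E) := by
  obtain ⟨h1, h2⟩ := sum_eq R P hP E hfin
  rw [h2]
  have : ∫ t in E, K = K * volume.real E := by simp [mul_comm]
  rw [← this]
  exact setIntegral_mono_on_ae (integrableOn_const hfin) h1 hE h

open Classical in
lemma sum_le {ι : Type*} (R : Finset ι) (P : ι → Set ℝ) (hP : ∀ j ∈ R, MeasurableSet (P j))
    (E : Set ℝ) (hE : MeasurableSet E) (hfin : volume E ≠ ⊤) (K : ℝ)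
    (h : ∀ t : ℝ, ((R.filter (fun j => t ∈ P j)).card : ℝ) ≤ K) :
    ∑ j ∈ R, volume.real (P j ∩ E) ≤ K * volume.real E := by
  obtain ⟨h1, h2⟩ := sum_eq R P hP E hfin
  rw [h2]
  have : ∫ t in E, K = K * volume.real E := by simp [mul_comm]
  rw [← this]
  exact setIntegral_mono_on h1 (integrableOn_const hfin) hE (fun t _ => h t)

lemma vol_le_of_alive {P : Set ℝ} {r d p : ℝ} (hp : 0 < p) (hsub : P ⊆ Set.Ico r d)
    (hfin : volume P ≠ ⊤) (h : ∀ t ∈ P, Wk P t < p) : volume.real P ≤ p := by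
  by_contra! hc
  have hd : Wk P d = volume.real P := by
    unfold Wk; congr 1; exact Set.inter_eq_left.2 (fun x hx => (hsub hx).2)
  have hr : Wk P r = 0 := by
    unfold Wk
    have : P ∩ Set.Iio r = ∅ := by
      ext x; simp only [Set.mem_inter_iff, Set.mem_Iio, Set.mem_empty_iff_false, iff_false]
      rintro ⟨a, b⟩; exact absurd (hsub a).1 (not_le.2 b)
    rw [this]; simp
  obtain ⟨t, ht⟩ := mem_range_of_exists_le_of_exists_ge (Wk_cont hfin) (c := p)
    ⟨r, by linarith⟩ ⟨d, by linarith⟩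
  have : P ⊆ Set.Iio t := by
    intro x hx
    by_contra hxt
    have := Wk_mono hfin (not_lt.1 hxt)
    linarith [h x hx]
  have h2 : Wk P t = volume.real P := by unfold Wk; congr 1; exact Set.inter_eq_left.2 this
  linarith

lemma alive_iff {ι : Type*} {job : ι → Job} {P : ι → Set ℝ} {j : ι}
    (hsub : P j ⊆ (job j).lifespan) (hfin : volume (P j) ≠ ⊤) (t : ℝ) :
    Alive job P j t ↔ (job j).r ≤ t ∧ t < (job j).d ∧ Wk (P j) t < (job j).p := by
  have e : P j ∩ Set.Ico (job j).r t = P j ∩ Set.Iio t := by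
    ext x; simp only [Set.mem_inter_iff, Set.mem_Ico, Set.mem_Iio]
    constructor
    · rintro ⟨a, b, c⟩; exact ⟨a, c⟩
    · rintro ⟨a, c⟩; exact ⟨a, (hsub a).1, c⟩
  unfold Alive Wk
  rw [e, Set.mem_Ico, and_assoc, Measure.real,
    ENNReal.lt_ofReal_iff_toReal_lt (measure_ne_top_of_subset Set.inter_subset_left hfin)]

/-- The core: no job with minimal failing deadline. -/
lemma core {ι : Type*} (ρ : ℝ) (hρ0 : 0 < ρ) (hρ1 : ρ ≤ 1)
    (J R : Finset ι) (job : ι → Job) (P Q : ι → Set ℝ) (d : ℝ) (M m : ℕ)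
    (hR : ∀ j, j ∈ R ↔ j ∈ J ∧ (job j).d ≤ d)
    (hp : ∀ j ∈ R, (job j).p ≤ (1 - ρ) * (d - (job j).r))
    (hPm : ∀ j ∈ R, MeasurableSet (P j)) (hQm : ∀ j ∈ R, MeasurableSet (Q j))
    (hPs : ∀ j ∈ R, P j ⊆ (job j).lifespan) (hQs : ∀ j ∈ R, Q j ⊆ (job j).lifespan)
    (hPf : ∀ j ∈ R, volume (P j) ≠ ⊤) (hQf : ∀ j ∈ R, volume (Q j) ≠ ⊤)
    (hQp : ∀ j ∈ R, volume.real (Q j) = (job j).p)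
    (hQM : ∀ t : ℝ, ∀ S : Finset ι, S ⊆ R → (∀ j ∈ S, t ∈ Q j) → S.card ≤ M)
    (hdone : ∀ j ∈ R, (job j).d < d → ∀ t, (job j).d ≤ t → Wk (P j) t = (job j).p)
    (hm : (M : ℝ) / ρ ^ 2 ≤ (m : ℝ))
    (hedf : ∀ᵐ t : ℝ ∂volume, ∀ j ∈ R, Alive job P j t → t ∉ P j →
      ∃ S : Finset ι, S ⊆ J ∧ S.card = m ∧
      ∀ i ∈ S, t ∈ P i ∧ Alive job P i t ∧ (job i).d ≤ (job j).d) :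
    ∑ j ∈ R, (Wk (Q j) d - Wk (P j) d) ≤ 0 := by
  classical
  set f : ℝ → ℝ := fun t => ∑ j ∈ R, (Wk (Q j) t - Wk (P j) t) - (1 / ρ - 1) * M * (d - t) with hf
  have hX : 0 ≤ 1 / ρ - 1 := by
    have := one_le_one_div hρ0 hρ1; linarith
  have hM0 : (0 : ℝ) ≤ M := Nat.cast_nonneg M
  have hKm : (M : ℝ) / ρ ≤ m := by
    refine le_trans ?_ hm
    apply div_le_div_of_nonneg_left hM0 (by positivity)
    nlinarith
  have hcont : Continuous f := by
    apply Continuous.sub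
    · apply continuous_finset_sum
      intro j hj
      exact (Wk_cont (hQf j hj)).sub (Wk_cont (hPf j hj))
    · fun_prop
  have hinc : ∀ u t, u ≤ t → f t ≤ f u + M / ρ * (t - u) -
      ∑ j ∈ R, volume.real (P j ∩ Set.Ico u t) := by
    intro u t hut
    have h1 := sum_le R Q hQm (Set.Ico u t) measurableSet_Ico (by simp) M (by
      intro s
      exact_mod_cast hQM s _ (Finset.filter_subset _ _) (fun j hj => (Finset.mem_filter.1 hj).2))
    rw [Real.volume_real_Ico_of_le hut] at h1
    have h2 : ∑ j ∈ R, (Wk (Q j) t - Wk (P j) t) = ∑ j ∈ R, (Wk (Q j) u - Wk (P j) u) +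
        ∑ j ∈ R, volume.real (Q j ∩ Set.Ico u t) - ∑ j ∈ R, volume.real (P j ∩ Set.Ico u t) := by
      rw [← Finset.sum_add_distrib, ← Finset.sum_sub_distrib]
      apply Finset.sum_congr rfl
      intro j hj
      rw [Wk_sub (hQf j hj) hut, Wk_sub (hPf j hj) hut]; ring
    simp only [hf]
    rw [h2]
    have : (M : ℝ) / ρ * (t - u) = M * (t - u) + (1 / ρ - 1) * M * (t - u) := by ring
    linarith
  have hsmall : ∀ j ∈ R, ∀ t, t ≤ (job j).r → Wk (Q j) t = 0 := by
    intro j hj t ht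
    unfold Wk
    have : Q j ∩ Set.Iio t = ∅ := by
      ext x; simp only [Set.mem_inter_iff, Set.mem_Iio, Set.mem_empty_iff_false, iff_false]
      rintro ⟨a, b⟩
      have := (hQs j hj a).1
      linarith
    rw [this]; simp
  have hWn : ∀ (A : Set ℝ) t, 0 ≤ Wk A t := fun A t => measureReal_nonneg
  have hstep : ∀ t0 ≤ d, 0 < f t0 → ∃ j ∈ R, (job j).r < t0 ∧ 0 < f (job j).r := by
    intro t0 ht0 hft0
    obtain ⟨b, hb⟩ : ∃ b, ∀ j ∈ R, b ≤ (job j).r := by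
      obtain ⟨b, hb⟩ := (R.image (fun j => (job j).r)).bddBelow
      exact ⟨b, fun j hj => hb (by simpa using ⟨j, hj, rfl⟩)⟩
    have hne : (min b t0) ∈ Set.Iic t0 ∩ f ⁻¹' Set.Iic 0 := by
      refine ⟨Set.mem_Iic.2 (min_le_right b t0), ?_⟩
      simp only [Set.mem_preimage, Set.mem_Iic, hf]
      have : ∑ j ∈ R, (Wk (Q j) (min b t0) - Wk (P j) (min b t0)) ≤ 0 := by
        apply Finset.sum_nonpos
        intro j hj
        rw [hsmall j hj _ ((min_le_left _ _).trans (hb j hj))]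
        linarith [hWn (P j) (min b t0)]
      have h3 : 0 ≤ (1 / ρ - 1) * M * (d - min b t0) := by
        have := min_le_right b t0
        have : 0 ≤ d - min b t0 := by linarith
        positivity
      linarith
    have hcl : IsClosed (Set.Iic t0 ∩ f ⁻¹' Set.Iic 0) :=
      isClosed_Iic.inter (isClosed_Iic.preimage hcont)
    have hbd : BddAbove (Set.Iic t0 ∩ f ⁻¹' Set.Iic 0) := ⟨t0, fun x hx => hx.1⟩
    have hs := hcl.csSup_mem ⟨_, hne⟩ hbd
    set s := sSup (Set.Iic t0 ∩ f ⁻¹' Set.Iic 0) with hsdef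
    have hst : s ≤ t0 := hs.1
    have hfs : f s ≤ 0 := hs.2
    have hpos : ∀ t, s < t → t ≤ t0 → 0 < f t := by
      intro t h1 h2
      by_contra! hc
      exact absurd (le_csSup hbd ⟨h2, hc⟩) (not_le.2 h1)
    -- a non-busy good time
    obtain ⟨t, hts, htt0, hgood, hk⟩ : ∃ t, s < t ∧ t < t0 ∧ (∀ j ∈ R, Alive job P j t → t ∉ P j →
        ∃ S : Finset ι, S ⊆ J ∧ S.card = m ∧
        ∀ i ∈ S, t ∈ P i ∧ Alive job P i t ∧ (job i).d ≤ (job j).d) ∧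
        ((R.filter (fun j => t ∈ P j)).card : ℝ) < M / ρ := by
      by_contra! hc
      have h1 := sum_ge R P hPm (Set.Ico s t0) measurableSet_Ico (by simp) (M / ρ) (by
        have hns : ∀ᵐ t : ℝ ∂volume, t ≠ s := by simp [ae_iff]
        filter_upwards [hedf, hns] with t ht hn hmem
        exact hc t (lt_of_le_of_ne hmem.1 (Ne.symm hn)) hmem.2 ht)
      rw [Real.volume_real_Ico_of_le hst] at h1
      have := hinc s t0 hst
      linarith
    have hft := hpos t hts htt0.le
    have htd : t < d := by linarith
    have halive : ∀ j ∈ R, Alive job P j t → t ∈ P j := by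
      intro j hj ha
      by_contra hn
      obtain ⟨S, hSJ, hSc, hS⟩ := hgood j hj ha hn
      have : S ⊆ R.filter (fun j => t ∈ P j) := by
        intro i hi
        obtain ⟨a, b, c⟩ := hS i hi
        exact Finset.mem_filter.2 ⟨(hR i).2 ⟨hSJ hi, c.trans ((hR j).1 hj).2⟩, a⟩
      have := Finset.card_le_card this
      rw [hSc] at this
      have : (m : ℝ) ≤ ((R.filter (fun j => t ∈ P j)).card : ℝ) := by exact_mod_cast this
      linarith
    by_cases hcase : ∀ j ∈ R, Alive job P j t → (job j).p - Wk (P j) t ≤ (1 - ρ) * (d - t)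
    · exfalso
      have hd0 : 0 ≤ (1 - ρ) * (d - t) := mul_nonneg (by linarith) (by linarith)
      have h1 : ∑ j ∈ R, (Wk (Q j) t - Wk (P j) t) ≤
          ∑ j ∈ R, if t ∈ P j then (1 - ρ) * (d - t) else 0 := by
        apply Finset.sum_le_sum
        intro j hj
        have hq := Wk_le (hQf j hj) t
        rw [hQp j hj] at hq
        by_cases ha : Alive job P j t
        · rw [if_pos (halive j hj ha)]
          linarith [hcase j hj ha]
        · have : Wk (Q j) t - Wk (P j) t ≤ 0 := by
            rw [alive_iff (hPs j hj) (hPf j hj)] at ha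
            rcases lt_or_ge t (job j).r with h | h
            · rw [hsmall j hj t h.le]; linarith [hWn (P j) t]
            · rcases lt_or_ge t (job j).d with h' | h'
              · have : ¬ Wk (P j) t < (job j).p := fun h'' => ha ⟨h, h', h''⟩
                linarith
              · rw [hdone j hj (by linarith) t h']; linarith
          refine this.trans ?_
          split_ifs
          · exact hd0
          · exact le_rfl
      rw [← Finset.sum_filter, Finset.sum_const, nsmul_eq_mul] at h1
      have h2 := mul_le_mul_of_nonneg_right hk.le hd0
      have h3 : (M : ℝ) / ρ * ((1 - ρ) * (d - t)) = (1 / ρ - 1) * M * (d - t) := by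
        field_simp
      simp only [hf] at hft
      linarith
    · push Not at hcase
      obtain ⟨j, hj, ha, hlt⟩ := hcase
      have ha' := (alive_iff (hPs j hj) (hPf j hj) t).1 ha
      obtain ⟨hr, hd, hw⟩ := ha'
      refine ⟨j, hj, by linarith, ?_⟩
      set E := Set.Ico (job j).r t \ P j with hE
      have hEm : MeasurableSet E := measurableSet_Ico.diff (hPm j hj)
      have hEf : volume E ≠ ⊤ := measure_ne_top_of_subset Set.diff_subset (by simp)
      have hge := sum_ge R P hPm E hEm hEf m (by
        filter_upwards [hedf] with x hx hxE
        have hax : Alive job P j x := by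
          rw [alive_iff (hPs j hj) (hPf j hj)]
          exact ⟨hxE.1.1, hxE.1.2.trans hd, (Wk_mono (hPf j hj) hxE.1.2.le).trans_lt hw⟩
        obtain ⟨S, hSJ, hSc, hS⟩ := hx j hj hax hxE.2
        have : S ⊆ R.filter (fun j => x ∈ P j) := by
          intro i hi
          obtain ⟨a, b, c⟩ := hS i hi
          exact Finset.mem_filter.2 ⟨(hR i).2 ⟨hSJ hi, c.trans ((hR j).1 hj).2⟩, a⟩
        have := Finset.card_le_card this
        rw [hSc] at this
        exact_mod_cast this)
      have hvE : (t - (job j).r) = volume.real (P j ∩ Set.Ico (job j).r t) + volume.real E := by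
        have := measureReal_inter_add_diff (μ := volume) (s := Set.Ico (job j).r t) (t := P j)
          (hPm j hj) (h := by simp)
        rw [Real.volume_real_Ico_of_le hr] at this
        rw [← this, Set.inter_comm]
      have hWj := Wk_sub (hPf j hj) hr
      have hWr := hWn (P j) (job j).r
      have hy : ρ * (t - (job j).r) ≤ volume.real E := by
        have := hp j hj
        nlinarith
      have hle : ∑ i ∈ R, volume.real (P i ∩ E) ≤
          ∑ i ∈ R, volume.real (P i ∩ Set.Ico (job j).r t) := by
        apply Finset.sum_le_sum
        intro i hi
        exact measureReal_mono (Set.inter_subset_inter_right _ Set.diff_subset)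
          (measure_ne_top_of_subset Set.inter_subset_right (by simp))
      have h5 : (M : ℝ) / ρ * (t - (job j).r) ≤ m * volume.real E := by
        calc (M : ℝ) / ρ * (t - (job j).r) = M / ρ ^ 2 * (ρ * (t - (job j).r)) := by
              field_simp
          _ ≤ m * volume.real E := by
              apply mul_le_mul hm hy _ (Nat.cast_nonneg m)
              exact mul_nonneg hρ0.le (by linarith)
      have := hinc _ _ hr
      linarith
  have hfd : f d ≤ 0 := by
    by_contra! hc
    obtain ⟨j, hj, -, hfj⟩ := hstep d le_rfl hc
    obtain ⟨k, hk, hmin⟩ := (R.filter (fun j => 0 < f (job j).r)).exists_min_image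
      (fun j => (job j).r) ⟨j, Finset.mem_filter.2 ⟨hj, hfj⟩⟩
    obtain ⟨hkR, hkf⟩ := Finset.mem_filter.1 hk
    have hkd : (job k).r ≤ d := by
      have := (job k).p_pos
      have := (job k).fits
      have := ((hR k).1 hkR).2
      linarith
    obtain ⟨l, hl, hlr, hlf⟩ := hstep _ hkd hkf
    have := hmin l (Finset.mem_filter.2 ⟨hl, hlf⟩)
    linarith
  simpa [hf] using hfd

end EDFProof

/-- EDF is `1/ρ²`-machine optimal when all jobs have relative laxity at least `ρ`: if the
instance is feasible on `m*` machines and `m ≥ m*/ρ²`, then every EDF schedule on `m`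
machines completes every job. -/
theorem edf_machine_optimal {ι : Type*} (ρ : ℝ) (hρ : ρ ∈ Set.Ioc (0 : ℝ) 1)
    (J : Finset ι) (job : ι → Job)
    (hlax : ∀ j ∈ J, ρ * (job j).len ≤ (job j).laxity)
    (mstar m : ℕ) (hfeas : FeasibleOn J job mstar)
    (hm : (mstar : ℝ) / ρ ^ 2 ≤ (m : ℝ)) :
    ∀ P : ι → Set ℝ, IsEDFSchedule J job m P →
      ∀ j ∈ J, volume (P j) = ENNReal.ofReal (job j).p := by
  intro P hP
  classical
  obtain ⟨⟨hPm, hPs, hPc⟩, hPa, hPe⟩ := hP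
  obtain ⟨Q, ⟨hQm, hQs, hQc⟩, hQv⟩ := hfeas
  have hPf : ∀ j ∈ J, volume (P j) ≠ ⊤ := fun j hj =>
    measure_ne_top_of_subset (hPs j hj) (by simp [Job.lifespan])
  have hQf : ∀ j ∈ J, volume (Q j) ≠ ⊤ := fun j hj =>
    measure_ne_top_of_subset (hQs j hj) (by simp [Job.lifespan])
  have hPsub : ∀ j ∈ J, P j ⊆ Set.Ico (job j).r (job j).d := fun j hj t ht => (hPa j hj t ht).1
  have hPle : ∀ j ∈ J, volume.real (P j) ≤ (job j).p := fun j hj =>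
    EDFProof.vol_le_of_alive (job j).p_pos (hPsub j hj) (hPf j hj) (fun t ht =>
      ((EDFProof.alive_iff (hPs j hj) (hPf j hj) t).1 (hPa j hj t ht)).2.2)
  suffices h : ∀ j ∈ J, volume.real (P j) = (job j).p by
    intro j hj
    rw [← h j hj, Measure.real, ENNReal.ofReal_toReal (hPf j hj)]
  by_contra! hc
  obtain ⟨j0, hj0, hne0⟩ := hc
  obtain ⟨k, hk, hmin⟩ := (J.filter (fun j => volume.real (P j) ≠ (job j).p)).exists_min_image
    (fun j => (job j).d) ⟨j0, Finset.mem_filter.2 ⟨hj0, hne0⟩⟩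
  obtain ⟨hkJ, hkne⟩ := Finset.mem_filter.1 hk
  have hQp : ∀ j ∈ J, volume.real (Q j) = (job j).p := fun j hj => by
    rw [Measure.real, hQv j hj, ENNReal.toReal_ofReal (job j).p_pos.le]
  have hfull : ∀ j ∈ J, ∀ t, (job j).d ≤ t → EDFProof.Wk (P j) t = volume.real (P j) := by
    intro j hj t ht
    unfold EDFProof.Wk
    congr 1
    exact Set.inter_eq_left.2 (fun x hx => (hPsub j hj hx).2.trans_le ht)
  have hmem : ∀ j, j ∈ J.filter (fun j => (job j).d ≤ (job k).d) ↔ j ∈ J ∧ (job j).d ≤ (job k).d :=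
    fun j => Finset.mem_filter
  have key := EDFProof.core ρ hρ.1 hρ.2 J (J.filter (fun j => (job j).d ≤ (job k).d)) job P Q
    (job k).d mstar m hmem
    (by
      intro j hj
      obtain ⟨hj, hd⟩ := (hmem j).1 hj
      have := hlax j hj
      unfold Job.len Job.laxity at this
      nlinarith [hρ.2])
    (fun j hj => hPm j ((hmem j).1 hj).1) (fun j hj => hQm j ((hmem j).1 hj).1)
    (fun j hj => hPs j ((hmem j).1 hj).1) (fun j hj => hQs j ((hmem j).1 hj).1)
    (fun j hj => hPf j ((hmem j).1 hj).1) (fun j hj => hQf j ((hmem j).1 hj).1)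
    (fun j hj => hQp j ((hmem j).1 hj).1)
    (fun t S hS h => hQc t S (hS.trans (Finset.filter_subset _ _)) h)
    (by
      intro j hj hd t ht
      have hjJ := ((hmem j).1 hj).1
      rw [hfull j hjJ t ht]
      by_contra hn
      have := hmin j (Finset.mem_filter.2 ⟨hjJ, hn⟩)
      linarith)
    hm
    (by
      filter_upwards [hPe] with t ht j hj
      exact ht j ((hmem j).1 hj).1)
  have hQd : ∀ j ∈ J, (job j).d ≤ (job k).d → EDFProof.Wk (Q j) (job k).d = (job j).p := by
    intro j hj hd
    rw [← hQp j hj]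
    unfold EDFProof.Wk
    apply le_antisymm (measureReal_mono Set.inter_subset_left (hQf j hj))
    have h1 : Q j ⊆ (Q j ∩ Set.Iio (job k).d) ∪ {(job k).d} := by
      intro x hx
      have := (hQs j hj hx).2
      rcases lt_or_eq_of_le (this.trans hd) with h | h
      · exact Or.inl ⟨hx, h⟩
      · exact Or.inr h
    have h2 := measureReal_mono (μ := volume) h1 (by
      apply measure_union_ne_top
      · exact measure_ne_top_of_subset Set.inter_subset_left (hQf j hj)
      · simp)
    have h3 := measureReal_union_le (μ := volume) (Q j ∩ Set.Iio (job k).d) {(job k).d}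
    have h4 : volume.real ({(job k).d} : Set ℝ) = 0 := by simp [Measure.real]
    linarith
  have hpos : 0 < ∑ j ∈ J.filter (fun j => (job j).d ≤ (job k).d),
      (EDFProof.Wk (Q j) (job k).d - EDFProof.Wk (P j) (job k).d) := by
    apply Finset.sum_pos'
    · intro j hj
      obtain ⟨hj, hd⟩ := (hmem j).1 hj
      rw [hQd j hj hd, hfull j hj _ hd]
      linarith [hPle j hj]
    · refine ⟨k, (hmem k).2 ⟨hkJ, le_rfl⟩, ?_⟩
      rw [hQd k hkJ le_rfl, hfull k hkJ _ le_rfl]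
      have := lt_of_le_of_ne (hPle k hkJ) hkne
      linarith
  linarith
end
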